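/- Let p ∈ (0, 1/2), let c ≥ 0, and let x₂, x₂' ∈ (0,1) satisfy x₂ − c ≥ x₂' ≥ 1/2 + p. Set x₁ = 1 − x₂ and x₁' = 1 − x₂'. Then KL((1/2,1/2),(x₁,x₂)) − KL((1/2,1/2),(x₁',x₂')) ≥ p·c. -/

import Mathlib

/-- KL-divergence from the uniform strategy `(1/2,1/2)` to `(y₁,y₂)`. -/
noncomputable def KL2 (y₁ y₂ : ℝ) : ℝ :=
  (1/2) * Real.log (1/(2*y₁)) + (1/2) * Real.log (1/(2*y₂))

/-!
The divergence depends on `(y₁, y₂)` only through the product `y₁ * y₂`, so a gap of divergences is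
half the logarithm of a ratio of products. The bound `1 - t⁻¹ ≤ log t` makes the gap linear in the
products, and AM-GM bounds the denominator `x₂' * (1 - x₂')` by `1/4`. Finally
`x₂' * (1 - x₂') - x₂ * (1 - x₂) = (x₂ - x₂') * (x₂ + x₂' - 1)`, where the factors are at least `c`
and `2 * p`.
-/

theorem KL2_eq_neg_half_mul_log {a b : ℝ} (ha : a ≠ 0) (hb : b ≠ 0) :
    KL2 a b = -(1 / 2) * Real.log (4 * (a * b)) := by
  have hlog : Real.log (4 * (a * b)) = Real.log (2 * a) + Real.log (2 * b) := by
    rw [← Real.log_mul (mul_ne_zero two_ne_zero ha) (mul_ne_zero two_ne_zero hb)]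
    congr 1
    ring
  rw [KL2, one_div (2 * a), one_div (2 * b), Real.log_inv, Real.log_inv, hlog]
  ring

theorem KL2_sub_KL2_eq_half_mul_log_div {a b a' b' : ℝ}
    (ha : a ≠ 0) (hb : b ≠ 0) (ha' : a' ≠ 0) (hb' : b' ≠ 0) :
    KL2 a b - KL2 a' b' = 1 / 2 * Real.log (a' * b' / (a * b)) := by
  have hab : a * b ≠ 0 := mul_ne_zero ha hb
  have hab' : a' * b' ≠ 0 := mul_ne_zero ha' hb'
  rw [KL2_eq_neg_half_mul_log ha hb, KL2_eq_neg_half_mul_log ha' hb',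
    Real.log_mul four_ne_zero hab, Real.log_mul four_ne_zero hab', Real.log_div hab' hab]
  ring

theorem half_mul_one_sub_div_le_KL2_sub_KL2 {a b a' b' : ℝ}
    (ha : 0 < a) (hb : 0 < b) (ha' : 0 < a') (hb' : 0 < b') :
    1 / 2 * (1 - a * b / (a' * b')) ≤ KL2 a b - KL2 a' b' := by
  rw [KL2_sub_KL2_eq_half_mul_log_div ha.ne' hb.ne' ha'.ne' hb'.ne', ← inv_div (a' * b')]
  gcongr
  exact Real.one_sub_inv_le_log_of_pos (by positivity)

theorem two_mul_sub_le_KL2_sub_KL2 {a b a' b' : ℝ}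
    (ha : 0 < a) (hb : 0 < b) (ha' : 0 < a') (hb' : 0 < b')
    (hsum : a' + b' ≤ 1) (hle : a * b ≤ a' * b') :
    2 * (a' * b' - a * b) ≤ KL2 a b - KL2 a' b' := by
  have hpos : 0 < a' * b' := mul_pos ha' hb'
  have hquarter : a' * b' ≤ 1 / 4 := by
    linarith [four_mul_le_pow_two_add a' b', pow_le_one₀ (n := 2) (add_pos ha' hb').le hsum]
  calc 2 * (a' * b' - a * b) = 1 / 2 * ((a' * b' - a * b) / (1 / 4)) := by ring
    _ ≤ 1 / 2 * ((a' * b' - a * b) / (a' * b')) := by gcongr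
    _ = 1 / 2 * (1 - a * b / (a' * b')) := by rw [sub_div, div_self hpos.ne']
    _ ≤ KL2 a b - KL2 a' b' := half_mul_one_sub_div_le_KL2_sub_KL2 ha hb ha' hb'

theorem two_mul_sub_mul_le_KL2_one_sub_sub_KL2_one_sub {x y : ℝ}
    (hx : 1 / 2 ≤ x) (hxy : x ≤ y) (hy : y < 1) :
    2 * ((y - x) * (x + y - 1)) ≤ KL2 (1 - y) y - KL2 (1 - x) x := by
  have hfactor : (1 - x) * x - (1 - y) * y = (y - x) * (x + y - 1) := by ring
  have hle : (1 - y) * y ≤ (1 - x) * x := by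
    rw [← sub_nonneg, hfactor]
    exact mul_nonneg (by linarith) (by linarith)
  rw [← hfactor]
  exact two_mul_sub_le_KL2_sub_KL2 (by linarith) (by linarith) (by linarith) (by linarith)
    (sub_add_cancel 1 x).le hle

/-- If `p ∈ (0,1/2)`, `c ≥ 0` and `x₂ − c ≥ x₂' ≥ 1/2 + p` with `x₂, x₂' ∈ (0,1)`,
then the KL-divergence to `(1−x₂, x₂)` exceeds that to `(1−x₂', x₂')` by at least `p·c`. -/
theorem kl_gap_of_closer_to_boundary (p c x₂ x₂' : ℝ)
    (hp : p ∈ Set.Ioo (0 : ℝ) (1/2)) (hc : 0 ≤ c)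
    (hx2 : x₂ ∈ Set.Ioo (0 : ℝ) 1) (hx2' : x₂' ∈ Set.Ioo (0 : ℝ) 1)
    (h1 : x₂ - c ≥ x₂') (h2 : x₂' ≥ 1/2 + p) :
    KL2 (1 - x₂) x₂ - KL2 (1 - x₂') x₂' ≥ p * c := by
  have hp₀ : 0 ≤ p := hp.1.le
  have hproduct : c * (2 * p) ≤ (x₂ - x₂') * (x₂' + x₂ - 1) :=
    mul_le_mul (by linarith) (by linarith) (by linarith) (by linarith)
  calc p * c ≤ 2 * (c * (2 * p)) := by linarith [mul_nonneg hp₀ hc]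
    _ ≤ 2 * ((x₂ - x₂') * (x₂' + x₂ - 1)) := by gcongr
    _ ≤ KL2 (1 - x₂) x₂ - KL2 (1 - x₂') x₂' :=
      two_mul_sub_mul_le_KL2_one_sub_sub_KL2_one_sub (by linarith) (by linarith) hx2.2
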